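/- arXiv:2111.04066 — 2 statements merged into one kernel-verified Lean document; each statement's English description precedes it below -/
import Mathlib

section
/- Let β∈(0,1), let T=(V,E) be a finite tree, let S⊆V be a subset of the vertices and let v∈V be an arbitrary vertex. Let τ_1,τ_2∈{0,1}^S be two configurations on S which differ only on a subset W⊆S. Then |μ_{T,β}(σ_v=1 | σ_S=τ_1) − μ_{T,β}(σ_v=1 | σ_S=τ_2)| ≤ Σ_{w∈W} ((1−β)/(1+β))^{dist(v,w)}, where dist(v,w) denotes the graph distance between v and w in T. -/
/-!
By the triangle inequality the boundary condition may be changed one site `w` at a time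
(`finset_sites`), so it suffices to bound the effect of a single flip by `θ ^ dist v w`, where
`θ = (1 - β) / (1 + β)` (`single_site`).

Root the tree at `v`. Its edges are the pairs `{x, p x}` of a non-root vertex and its parent, so the
Ising weight is a product over non-root vertices (`exists_parent`, `pow_monoEdges`), and conditioning
on the spins of `S \ {w}` amounts to multiplying by `0/1`-valued external fields. Let `Z i j` be the
partition function restricted to `σ v = i`, `σ w = j`. The two conditional marginals at `v` are read
off the two columns of this `2 × 2` matrix, and they differ by `|det Z|` divided by the product of the
column sums. The lemma `pairZ_det_le` bounds this quotient by `θ ^ dist v w`, for arbitrary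
nonnegative fields, by removing the deepest vertex `a` of the tree. If `a ≠ w`, summing out its spin
only changes the field at `p a`. If `a = w`, the matrix `Z` is the one for the pair `v, p a` times the
transfer matrix of the edge times a diagonal matrix. Determinants are multiplicative, the transfer
matrix has determinant of absolute value `1 - β ^ 2 = θ (1 + β) ^ 2`, and for column sums `P`, `Q` one
has `(β P + Q) (P + β Q) ≥ (1 + β) ^ 2 P Q`; this gains one factor `θ`.
-/

open Classical Filter

/-- The probability of an event `A` under the (possibly unnormalised) distribution `μ`
on configurations `α → Bool`. -/
noncomputable def pr {α : Type*} [Fintype α] (μ : (α → Bool) → ℝ) (A : Set (α → Bool)) : ℝ :=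
  ∑ σ : α → Bool, if σ ∈ A then μ σ else 0

/-- Conditional probability `μ(A | B)`. -/
noncomputable def cpr {α : Type*} [Fintype α] (μ : (α → Bool) → ℝ) (A B : Set (α → Bool)) : ℝ :=
  pr μ (A ∩ B) / pr μ B

/-- The event that the configuration agrees with `τ` on `S`. -/
def eventEq {α : Type*} (S : Set α) (τ : α → Bool) : Set (α → Bool) := {σ | ∀ v ∈ S, σ v = τ v}

/-- The event that site `v` has spin `i`. -/
def eventVal {α : Type*} (v : α) (i : Bool) : Set (α → Bool) := {σ | σ v = i}

/-- `m(σ)`: the number of edges of `G` whose two endpoints receive the same spin. -/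
noncomputable def monoEdges {V : Type*} (G : SimpleGraph V) (σ : V → Bool) : ℕ :=
  Nat.card {e : Sym2 V // e ∈ G.edgeSet ∧ ∀ x ∈ e, ∀ y ∈ e, σ x = σ y}

/-- The Ising distribution `μ_{G,β}(σ) = β^{m(σ)}/Z_{G,β}` on configurations `V → Bool`. -/
noncomputable def ising {V : Type*} [Fintype V] (G : SimpleGraph V) (β : ℝ) :
    (V → Bool) → ℝ :=
  fun σ => β ^ monoEdges G σ / ∑ σ' : V → Bool, β ^ monoEdges G σ'

/-! ### Resampling a leaf -/

/-- Interaction weight of an edge: `β` if the two spins agree, `1` otherwise. -/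
noncomputable def edgeK (β : ℝ) (b c : Bool) : ℝ := if b = c then β else 1

/-- The Boltzmann weight of `σ` in a model with external fields `h`, in which every vertex `x ∈ s`
is joined to its parent `p x`. -/
noncomputable def wt {V : Type} [Fintype V] (β : ℝ) (p : V → V) (s : Finset V)
    (h : V → Bool → ℝ) (σ : V → Bool) : ℝ :=
  (∏ x ∈ s, edgeK β (σ x) (σ (p x))) * ∏ x, h x (σ x)

/-- The partition function restricted to `σ v = i` and `σ w = j`. -/
noncomputable def pairZ {V : Type} [Fintype V] (β : ℝ) (p : V → V) (v : V) (s : Finset V)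
    (h : V → Bool → ℝ) (w : V) (i j : Bool) : ℝ :=
  ∑ σ : V → Bool, if σ v = i ∧ σ w = j then wt β p s h σ else 0

lemma edgeK_pos {β : ℝ} (hβ : 0 < β) (b c : Bool) : 0 < edgeK β b c := by
  unfold edgeK; split_ifs <;> linarith

lemma wt_nonneg {V : Type} [Fintype V] {β : ℝ} (hβ : 0 < β) (p : V → V) (s : Finset V)
    {h : V → Bool → ℝ} (hh : ∀ x b, 0 ≤ h x b) (σ : V → Bool) : 0 ≤ wt β p s h σ :=
  mul_nonneg (Finset.prod_nonneg fun _ _ => (edgeK_pos hβ _ _).le)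
    (Finset.prod_nonneg fun _ _ => hh _ _)

lemma pairZ_nonneg {V : Type} [Fintype V] {β : ℝ} (hβ : 0 < β) (p : V → V) (v : V)
    (s : Finset V) {h : V → Bool → ℝ} (hh : ∀ x b, 0 ≤ h x b) (w : V) (i j : Bool) :
    0 ≤ pairZ β p v s h w i j :=
  Finset.sum_nonneg fun σ _ => by
    split_ifs
    · exact wt_nonneg hβ p s hh σ
    · exact le_rfl

/-- Averaging over the spin at `a` does not change a sum over all configurations. -/
lemma sum_resample {V : Type} [Fintype V] (a : V) (F : (V → Bool) → ℝ) :
    ∑ σ, F σ = ∑ σ, (1 / 2) * ∑ b, F (Function.update σ a b) := by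
  have hinv : Function.Involutive
      (fun σ : V → Bool => Function.update σ a (!σ a)) := by
    intro σ; simp
  have h1 : ∑ σ, F (Function.update σ a (!σ a)) = ∑ σ, F σ :=
    Equiv.sum_comp hinv.toPerm F
  have h2 : ∀ σ : V → Bool, ∑ b, F (Function.update σ a b)
      = F σ + F (Function.update σ a (!σ a)) := by
    intro σ
    have h3 : F σ = F (Function.update σ a (σ a)) := by rw [Function.update_eq_self]
    rw [h3, Fintype.sum_bool]
    cases σ a <;> simp [add_comm]
  simp_rw [h2, ← Finset.mul_sum, Finset.sum_add_distrib, h1]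
  ring

/-- The weight factorises at a leaf `a` hanging from `p a`. Replacing the field at
`a` by the constant `1 / 2` compensates for the sum over its now irrelevant spin. -/
lemma wt_insert_update {V : Type} [Fintype V] (β : ℝ) (p : V → V) (s : Finset V)
    (h : V → Bool → ℝ) (a : V) (has : a ∉ s) (hpa : p a ≠ a) (hps : ∀ x ∈ s, p x ≠ a)
    (σ : V → Bool) (b : Bool) :
    (1 / 2) * wt β p (insert a s) h (Function.update σ a b)
      = edgeK β b (σ (p a)) * h a b * wt β p s (Function.update h a fun _ => 1 / 2) σ := by
  have h1 : ∏ x ∈ s, edgeK β (Function.update σ a b x) (Function.update σ a b (p x))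
      = ∏ x ∈ s, edgeK β (σ x) (σ (p x)) := by
    refine Finset.prod_congr rfl fun x hx => ?_
    have hxa : x ≠ a := fun e => has (e ▸ hx)
    rw [Function.update_of_ne hxa, Function.update_of_ne (hps x hx)]
  have h2 : ∏ x, h x (Function.update σ a b x)
      = h a b * ∏ x ∈ Finset.univ.erase a, h x (σ x) := by
    rw [← Finset.mul_prod_erase _ _ (Finset.mem_univ a), Function.update_self]
    congr 1
    refine Finset.prod_congr rfl fun x hx => ?_
    rw [Function.update_of_ne (Finset.ne_of_mem_erase hx)]
  have h3 : ∏ x, (Function.update h a fun _ => 1 / 2) x (σ x)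
      = 1 / 2 * ∏ x ∈ Finset.univ.erase a, h x (σ x) := by
    rw [← Finset.mul_prod_erase _ _ (Finset.mem_univ a), Function.update_self]
    congr 1
    refine Finset.prod_congr rfl fun x hx => ?_
    rw [Function.update_of_ne (Finset.ne_of_mem_erase hx)]
  unfold wt
  rw [Finset.prod_insert has, h1, h2, h3, Function.update_self, Function.update_of_ne hpa]
  ring

/-- Multiplying the field at `q` by `g` multiplies the weight by `g (σ q)`. -/
lemma wt_mul_field {V : Type} [Fintype V] (β : ℝ) (p : V → V) (s : Finset V)
    (h : V → Bool → ℝ) (q : V) (g : Bool → ℝ) (σ : V → Bool) :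
    wt β p s (fun x b => h x b * if x = q then g b else 1) σ = g (σ q) * wt β p s h σ := by
  unfold wt
  rw [Finset.prod_mul_distrib, Finset.prod_ite_eq']
  simp
  ring

/-- A leaf `a` other than the two observed vertices can be absorbed into the field at its parent. -/
lemma pairZ_insert_of_ne {V : Type} [Fintype V] (β : ℝ) (p : V → V) (v : V) (s : Finset V)
    (h : V → Bool → ℝ) (a w : V) (has : a ∉ s) (hpa : p a ≠ a) (hps : ∀ x ∈ s, p x ≠ a)
    (hva : v ≠ a) (hwa : w ≠ a) (i j : Bool) :
    pairZ β p v (insert a s) h w i j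
      = pairZ β p v s (fun x b => (Function.update h a fun _ => 1 / 2) x b *
          if x = p a then ∑ c, edgeK β c b * h a c else 1) w i j := by
  unfold pairZ
  rw [sum_resample a]
  refine Finset.sum_congr rfl fun σ _ => ?_
  simp only [Function.update_of_ne hva, Function.update_of_ne hwa]
  split_ifs
  · rw [wt_mul_field, Finset.mul_sum, Finset.sum_mul]
    exact Finset.sum_congr rfl fun b _ => wt_insert_update β p s h a has hpa hps σ b
  · simp

/-- One step of the transfer-matrix recursion: the observed vertex moves from the leaf `a` to its
parent. -/
lemma pairZ_insert_self {V : Type} [Fintype V] (β : ℝ) (p : V → V) (v : V) (s : Finset V)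
    (h : V → Bool → ℝ) (a : V) (has : a ∉ s) (hpa : p a ≠ a) (hps : ∀ x ∈ s, p x ≠ a)
    (hva : v ≠ a) (i j : Bool) :
    pairZ β p v (insert a s) h a i j
      = ∑ k, edgeK β j k * h a j *
          pairZ β p v s (Function.update h a fun _ => 1 / 2) (p a) i k := by
  unfold pairZ
  rw [sum_resample a]
  simp_rw [Finset.mul_sum]
  rw [Finset.sum_comm (s := (Finset.univ : Finset Bool)) (t := Finset.univ) (f := fun k σ =>
    edgeK β j k * h a j * if σ v = i ∧ σ (p a) = k then
      wt β p s (Function.update h a fun _ => 1 / 2) σ else 0)]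
  refine Finset.sum_congr rfl fun σ _ => ?_
  simp only [Function.update_of_ne hva, Function.update_self]
  have key := wt_insert_update β p s h a has hpa hps σ j
  by_cases hi : σ v = i
  · simp only [hi, true_and]
    simpa [mul_ite] using key
  · simp [hi]

/-- Without edges, two distinct sites are independent. -/
lemma pairZ_empty {V : Type} [Fintype V] (β : ℝ) (p : V → V) (v : V)
    (h : V → Bool → ℝ) (w : V) (hw : w ≠ v) (i j : Bool) :
    pairZ β p v ∅ h w i j = h v i * h w j * (1 / 4 * ∑ σ : V → Bool,
      ∏ x ∈ (Finset.univ.erase v).erase w, h x (σ x)) := by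
  unfold pairZ
  rw [sum_resample v]
  simp_rw [Finset.mul_sum]
  rw [sum_resample w]
  refine Finset.sum_congr rfl fun σ _ => ?_
  have hmem : w ∈ Finset.univ.erase v := Finset.mem_erase.2 ⟨hw, Finset.mem_univ _⟩
  have key : wt β p ∅ h (Function.update (Function.update σ w j) v i)
      = h v i * (h w j * ∏ x ∈ (Finset.univ.erase v).erase w, h x (σ x)) := by
    unfold wt
    rw [Finset.prod_empty, one_mul, ← Finset.mul_prod_erase _ _ (Finset.mem_univ v),
      ← Finset.mul_prod_erase _ _ hmem]
    congr 1
    · simp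
    congr 1
    · simp [hw]
    refine Finset.prod_congr rfl fun x hx => ?_
    have h1 := Finset.ne_of_mem_erase hx
    have h2 := Finset.ne_of_mem_erase (Finset.mem_of_mem_erase hx)
    simp [h1, h2]
  simp only [Function.update_self, Function.update_of_ne hw]
  cases i <;> cases j <;> simp [key] <;> ring

/-! ### The determinant bound -/

/-- The correlation bound in determinant form: a column of `pairZ … w`, once normalised, is the
conditional law of `σ v` given `σ w`, and the total variation distance of the two columns is
`|det| / (product of the column sums)`. The induction adds the vertices in order of increasing depth
`d`, so that each new vertex `a` is a leaf. No connectivity is needed: if `w` is not joined to `v`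
by the edges present, the determinant vanishes. -/
lemma pairZ_det_le {V : Type} [Fintype V] {β : ℝ} (hβ0 : 0 < β) (hβ1 : β < 1) (p : V → V) (v : V)
    (d : V → ℕ) (hdv : d v = 0) (hd : ∀ x, x ≠ v → d x = d (p x) + 1) (s : Finset V) :
    v ∉ s → ∀ (h : V → Bool → ℝ), (∀ x b, 0 ≤ h x b) → ∀ w : V,
      |pairZ β p v s h w true true * pairZ β p v s h w false false
        - pairZ β p v s h w true false * pairZ β p v s h w false true|
      ≤ ((1 - β) / (1 + β)) ^ d w *
        ((pairZ β p v s h w true true + pairZ β p v s h w false true) *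
          (pairZ β p v s h w true false + pairZ β p v s h w false false)) := by
  have hθ0 : 0 ≤ (1 - β) / (1 + β) := div_nonneg (by linarith) (by linarith)
  induction s using Finset.induction_on_max_value d with
  | empty =>
    intro _ h hh w
    have hn := pairZ_nonneg hβ0 p v ∅ hh w
    by_cases hw : w = v
    · subst hw
      have h0 : pairZ β p w ∅ h w true false = 0 :=
        Finset.sum_eq_zero fun σ _ => if_neg (by rintro ⟨h1, h2⟩; simp [h1] at h2)
      have h1 : pairZ β p w ∅ h w false true = 0 :=
        Finset.sum_eq_zero fun σ _ => if_neg (by rintro ⟨h1, h2⟩; simp [h1] at h2)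
      rw [h0, h1, hdv, abs_of_nonneg (by simpa using mul_nonneg (hn _ _) (hn _ _))]
      simp
    · have h0 : pairZ β p v ∅ h w true true * pairZ β p v ∅ h w false false
        - pairZ β p v ∅ h w true false * pairZ β p v ∅ h w false true = 0 := by
        simp only [pairZ_empty β p v h w hw]
        ring
      rw [h0, abs_zero]
      exact mul_nonneg (pow_nonneg hθ0 _) (mul_nonneg (add_nonneg (hn _ _) (hn _ _))
        (add_nonneg (hn _ _) (hn _ _)))
  | insert a s has hmax ih =>
    intro hv h hh w
    have hva : v ≠ a := fun e => hv (e ▸ Finset.mem_insert_self _ _)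
    have hvs : v ∉ s := fun e => hv (Finset.mem_insert_of_mem e)
    have hpa : p a ≠ a := fun e => by
      have := hd a hva.symm
      rw [e] at this
      omega
    have hps : ∀ x ∈ s, p x ≠ a := fun x hx e => by
      have h1 := hd x (fun e => hvs (e ▸ hx))
      have h2 := hmax x hx
      rw [e] at h1
      omega
    have hh' : ∀ x b, 0 ≤ (Function.update h a fun _ => (1 / 2 : ℝ)) x b := by
      intro x b
      by_cases hx : x = a
      · subst hx; simp
      · rw [Function.update_of_ne hx]; exact hh x b
    by_cases hwa : w = a
    · subst hwa
      have ih' := ih hvs _ hh' (p w)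
      have hn := pairZ_nonneg hβ0 p v s hh' (p w)
      simp only [pairZ_insert_self β p v s h w has hpa hps hva, Fintype.sum_bool]
      rw [hd w hva.symm, pow_succ]
      set Z := pairZ β p v s (Function.update h w fun _ => (1 / 2 : ℝ)) (p w)
      have hA := hn true true
      have hB := hn true false
      have hC := hn false true
      have hD := hn false false
      generalize Z true true = A at *
      generalize Z true false = B at *
      generalize Z false true = C at *
      generalize Z false false = D at *
      have hx := hh w true
      have hy := hh w false
      generalize h w true = x at *
      generalize h w false = y at *
      have ht : 0 ≤ ((1 - β) / (1 + β)) ^ d (p w) := pow_nonneg hθ0 _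
      generalize ((1 - β) / (1 + β)) ^ d (p w) = t at *
      simp only [edgeK, if_true, reduceCtorEq, if_false, one_mul]
      have hθ : 1 - β ^ 2 = (1 - β) / (1 + β) * (1 + β) ^ 2 := by
        have : 1 + β ≠ 0 := by linarith
        field_simp
        ring
      generalize (1 - β) / (1 + β) = θ at *
      have hxy : 0 ≤ x * y * (1 - β ^ 2) := mul_nonneg (mul_nonneg hx hy) (by nlinarith)
      have hdet : (β * x * A + x * B) * (y * C + β * y * D)
          - (y * A + β * y * B) * (β * x * C + x * D)
          = -((A * D - B * C) * (x * y * (1 - β ^ 2))) := by ring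
      rw [hdet, abs_neg, abs_mul, abs_of_nonneg hxy]
      refine (mul_le_mul_of_nonneg_right ih' hxy).trans ?_
      rw [hθ]
      -- The two sides differ by a multiple of `β * (P - Q) ^ 2`, where `P`, `Q` are column sums.
      have hsq : 0 ≤ t * θ * (x * y) * (β * ((A + C) - (B + D)) ^ 2) := by positivity
      linarith
    · simp only [pairZ_insert_of_ne β p v s h a w has hpa hps hva hwa]
      refine ih hvs _ (fun x b => mul_nonneg (hh' x b) ?_) w
      split_ifs
      · exact Finset.sum_nonneg fun c _ => mul_nonneg (edgeK_pos hβ0 _ _).le (hh _ _)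
      · exact zero_le_one

/-! ### Rooting the tree -/

/-- In a tree rooted at `v`, every other vertex has a parent one step closer to `v`, and every edge
joins exactly one vertex to its parent. -/
lemma exists_parent {V : Type} [Fintype V] {T : SimpleGraph V} (hT : T.IsTree) (v : V) :
    ∃ p : V → V, (∀ x, x ≠ v → T.dist v x = T.dist v (p x) + 1) ∧
      (∀ x, x ≠ v → T.Adj x (p x)) ∧
      (∀ x y, x ≠ v → y ≠ v → s(x, p x) = s(y, p y) → x = y) ∧
      (∀ e ∈ T.edgeSet, ∃ x, x ≠ v ∧ s(x, p x) = e) := by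
  have hex : ∀ x, ∃ q, x ≠ v → (T.dist v x = T.dist v q + 1 ∧ T.Adj x q) := by
    intro x
    by_cases hx : x = v
    · exact ⟨v, fun h => absurd hx h⟩
    obtain ⟨w, hw⟩ := hT.connected.exists_walk_length_eq_dist x v
    cases w with
    | nil => exact absurd rfl hx
    | @cons _ q _ hadj w' =>
      refine ⟨q, fun _ => ⟨?_, hadj⟩⟩
      rw [SimpleGraph.Walk.length_cons] at hw
      have h1 := SimpleGraph.dist_le w'
      have h2 := hT.connected.dist_triangle (u := x) (v := q) (w := v)
      have h3 := SimpleGraph.dist_eq_one_iff_adj.2 hadj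
      rw [SimpleGraph.dist_comm (u := v), SimpleGraph.dist_comm (u := v)]
      omega
  choose p hp using hex
  have hinj : ∀ x y, x ≠ v → y ≠ v → s(x, p x) = s(y, p y) → x = y := by
    intro x y hx hy h
    rcases Sym2.eq_iff.1 h with h | ⟨h1, h2⟩
    · exact h.1
    · have h3 := (hp x hx).1
      have h4 := (hp y hy).1
      rw [h2] at h3
      rw [← h1] at h4
      omega
  refine ⟨p, fun x hx => (hp x hx).1, fun x hx => (hp x hx).2, hinj, ?_⟩
  -- Surjectivity onto the edges follows by counting, as a tree has `|V| - 1` edges.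
  have hsub : (Finset.univ.erase v).image (fun x => s(x, p x)) ⊆ T.edgeFinset := by
    intro e he
    obtain ⟨x, hx, rfl⟩ := Finset.mem_image.1 he
    rw [SimpleGraph.mem_edgeFinset]
    exact (hp x (Finset.ne_of_mem_erase hx)).2
  have hcard : ((Finset.univ.erase v).image (fun x => s(x, p x))).card = T.edgeFinset.card := by
    rw [Finset.card_image_of_injOn, Finset.card_erase_of_mem (Finset.mem_univ v),
      Finset.card_univ]
    · have := hT.card_edgeFinset
      omega
    · intro x hx y hy h
      exact hinj x y (Finset.ne_of_mem_erase hx) (Finset.ne_of_mem_erase hy) h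
  have heq := Finset.eq_of_subset_of_card_le hsub hcard.ge
  intro e he
  rw [← SimpleGraph.mem_edgeFinset, ← heq] at he
  obtain ⟨x, hx, rfl⟩ := Finset.mem_image.1 he
  exact ⟨x, Finset.ne_of_mem_erase hx, rfl⟩

/-- The unnormalised Ising weight as a product over the non-root vertices. -/
lemma pow_monoEdges {V : Type} [Fintype V] {T : SimpleGraph V} (β : ℝ) (v : V) (p : V → V)
    (hadj : ∀ x, x ≠ v → T.Adj x (p x))
    (hinj : ∀ x y, x ≠ v → y ≠ v → s(x, p x) = s(y, p y) → x = y)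
    (hsurj : ∀ e ∈ T.edgeSet, ∃ x, x ≠ v ∧ s(x, p x) = e) (σ : V → Bool) :
    β ^ monoEdges T σ = ∏ x ∈ Finset.univ.erase v, edgeK β (σ x) (σ (p x)) := by
  have hm : monoEdges T σ
      = ((Finset.univ.erase v).filter (fun x => σ x = σ (p x))).card := by
    unfold monoEdges
    rw [← Nat.card_eq_finsetCard]
    symm
    refine Nat.card_eq_of_bijective (fun x => ⟨s(x.1, p x.1), ?_, ?_⟩) ⟨?_, ?_⟩
    · exact hadj _ (Finset.ne_of_mem_erase (Finset.mem_filter.1 x.2).1)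
    · have := (Finset.mem_filter.1 x.2).2
      simp [this]
    · intro x y h
      refine Subtype.ext (hinj _ _ (Finset.ne_of_mem_erase (Finset.mem_filter.1 x.2).1)
        (Finset.ne_of_mem_erase (Finset.mem_filter.1 y.2).1) (congrArg Subtype.val h))
    · rintro ⟨e, he, hσ⟩
      obtain ⟨x, hx, rfl⟩ := hsurj e he
      refine ⟨⟨x, Finset.mem_filter.2 ⟨Finset.mem_erase.2 ⟨hx, Finset.mem_univ _⟩, ?_⟩⟩, rfl⟩
      exact hσ _ (Sym2.mem_mk_left _ _) _ (Sym2.mem_mk_right _ _)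
  rw [hm]
  simp [edgeK, Finset.prod_ite]

/-! ### Conditional marginals -/

/-- The normalising constant cancels in conditional probabilities. -/
lemma cpr_ising {V : Type} [Fintype V] (T : SimpleGraph V) {β : ℝ} (hβ : 0 < β)
    (A B : Set (V → Bool)) :
    cpr (ising T β) A B = cpr (fun σ => β ^ monoEdges T σ) A B := by
  have hZ : (∑ σ : V → Bool, β ^ monoEdges T σ) ≠ 0 :=
    (Finset.sum_pos (fun σ _ => pow_pos hβ _) Finset.univ_nonempty).ne'
  have h : ∀ C, pr (ising T β) C = pr (fun σ => β ^ monoEdges T σ) C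
      / ∑ σ : V → Bool, β ^ monoEdges T σ := by
    intro C
    unfold pr ising
    rw [Finset.sum_div]
    refine Finset.sum_congr rfl fun σ _ => ?_
    split_ifs <;> simp
  unfold cpr
  rw [h, h, div_div_div_cancel_right₀ hZ]

/-- The field that forces the spins on `S \ {w}` to agree with `τ`. -/
noncomputable def pinField {V : Type} (S : Set V) (w : V) (τ : V → Bool) (x : V) (b : Bool) : ℝ :=
  if x ∈ S ∧ x ≠ w → b = τ x then 1 else 0

lemma prod_pinField {V : Type} [Fintype V] (S : Set V) (w : V) (τ σ : V → Bool) :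
    ∏ x, pinField S w τ x (σ x) = if ∀ x, x ∈ S ∧ x ≠ w → σ x = τ x then 1 else 0 := by
  unfold pinField
  by_cases h : ∀ x, x ∈ S ∧ x ≠ w → σ x = τ x
  · rw [if_pos h]
    exact Finset.prod_eq_one fun x _ => if_pos (h x)
  · rw [if_neg h]
    push Not at h
    obtain ⟨x, hx, hne⟩ := h
    exact Finset.prod_eq_zero (Finset.mem_univ x) (if_neg fun h => hne (h hx))

/-- The bound for boundary conditions that differ at a single site. -/
lemma single_site {V : Type} [Fintype V] {β : ℝ} (hβ0 : 0 < β) (hβ1 : β < 1)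
    {T : SimpleGraph V} (hT : T.IsTree) (S : Set V) (v w : V) (hw : w ∈ S) (τ₁ τ₂ : V → Bool)
    (hagree : ∀ x ∈ S, x ≠ w → τ₁ x = τ₂ x) :
    |cpr (ising T β) (eventVal v true) (eventEq S τ₁)
        - cpr (ising T β) (eventVal v true) (eventEq S τ₂)|
      ≤ ((1 - β) / (1 + β)) ^ (T.dist v w) := by
  have hθ0 : 0 ≤ ((1 - β) / (1 + β)) ^ (T.dist v w) :=
    pow_nonneg (div_nonneg (by linarith) (by linarith)) _
  obtain ⟨p, hd, hadj, hinj, hsurj⟩ := exists_parent hT v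
  have hh : ∀ x b, 0 ≤ pinField S w τ₁ x b := fun x b => by
    unfold pinField; split_ifs <;> norm_num
  have hdet := pairZ_det_le hβ0 hβ1 p v (T.dist v) SimpleGraph.dist_self hd
    (Finset.univ.erase v) (Finset.notMem_erase v _) (pinField S w τ₁) hh w
  set Z := pairZ β p v (Finset.univ.erase v) (pinField S w τ₁) w with hZ
  -- Conditioning on `τ` selects a column of `Z` for any `τ` agreeing with `τ₁` on `S` off `w`.
  have hev : ∀ τ : V → Bool, (∀ x ∈ S, x ≠ w → τ₁ x = τ x) → ∀ i,
      pr (fun σ => β ^ monoEdges T σ) (eventVal v i ∩ eventEq S τ) = Z i (τ w) := by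
    intro τ hτ i
    simp only [hZ, pairZ, pr]
    refine Finset.sum_congr rfl fun σ _ => ?_
    rw [wt, ← pow_monoEdges β v p hadj hinj hsurj, prod_pinField]
    have hiff : σ ∈ eventVal v i ∩ eventEq S τ ↔
        (σ v = i ∧ σ w = τ w) ∧ ∀ x, x ∈ S ∧ x ≠ w → σ x = τ₁ x := by
      constructor
      · rintro ⟨h1, h2⟩
        exact ⟨⟨h1, h2 w hw⟩, fun x hx => (h2 x hx.1).trans (hτ x hx.1 hx.2).symm⟩
      · rintro ⟨⟨h1, h2⟩, h3⟩
        refine ⟨h1, fun x hx => ?_⟩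
        by_cases hxw : x = w
        · rw [hxw, h2]
        · exact (h3 x ⟨hx, hxw⟩).trans (hτ x hx hxw)
    by_cases h1 : σ v = i ∧ σ w = τ w
    · by_cases h2 : ∀ x, x ∈ S ∧ x ≠ w → σ x = τ₁ x
      · rw [if_pos (hiff.2 ⟨h1, h2⟩), if_pos h1, if_pos h2, mul_one]
      · rw [if_neg (fun h => h2 (hiff.1 h).2), if_pos h1, if_neg h2, mul_zero]
    · rw [if_neg (fun h => h1 (hiff.1 h).1), if_neg h1]
  have hsplit : ∀ τ : V → Bool, pr (fun σ => β ^ monoEdges T σ) (eventEq S τ)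
      = pr (fun σ => β ^ monoEdges T σ) (eventVal v true ∩ eventEq S τ)
        + pr (fun σ => β ^ monoEdges T σ) (eventVal v false ∩ eventEq S τ) := by
    intro τ
    unfold pr
    rw [← Finset.sum_add_distrib]
    refine Finset.sum_congr rfl fun σ _ => ?_
    by_cases h : σ ∈ eventEq S τ <;> cases hv : σ v <;> simp [h, hv, eventVal]
  have hpos : ∀ τ : V → Bool, 0 < pr (fun σ => β ^ monoEdges T σ) (eventEq S τ) := by
    intro τ
    refine Finset.sum_pos' (fun σ _ => ?_) ⟨τ, Finset.mem_univ _, ?_⟩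
    · split_ifs
      · exact (pow_pos hβ0 _).le
      · exact le_rfl
    · rw [if_pos (show τ ∈ eventEq S τ from fun x _ => rfl)]
      exact pow_pos hβ0 _
  have hp1 := hpos τ₁
  have hp2 := hpos τ₂
  rw [cpr_ising T hβ0, cpr_ising T hβ0, cpr, cpr]
  rw [hsplit, hev τ₁ (fun _ _ _ => rfl), hev τ₁ (fun _ _ _ => rfl)] at hp1 ⊢
  rw [hsplit τ₂, hev τ₂ hagree, hev τ₂ hagree] at hp2 ⊢
  have hfrac : ∀ a b c d t : ℝ, 0 < a + b → 0 < c + d →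
      |a * d - c * b| ≤ t * ((a + b) * (c + d)) → |a / (a + b) - c / (c + d)| ≤ t := by
    intro a b c d t h1 h2 h
    rw [div_sub_div _ _ h1.ne' h2.ne', abs_div, abs_of_pos (mul_pos h1 h2),
      div_le_iff₀ (mul_pos h1 h2), show a * (c + d) - (a + b) * c = a * d - c * b by ring]
    exact h
  cases h1 : τ₁ w <;> cases h2 : τ₂ w
  · simpa using hθ0
  · rw [h1] at hp1
    rw [h2] at hp2
    rw [abs_sub_comm]
    exact hfrac _ _ _ _ _ hp2 hp1 hdet
  · rw [h1] at hp1
    rw [h2] at hp2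
    exact hfrac _ _ _ _ _ hp1 hp2 hdet
  · simpa using hθ0

/-- The bound for a finite set of changed sites, by changing the boundary condition one site at a time and applying the triangle inequality. -/
lemma finset_sites {V : Type} [Fintype V] {β : ℝ} (hβ0 : 0 < β) (hβ1 : β < 1)
    {T : SimpleGraph V} (hT : T.IsTree) (S : Set V) (v : V) (τ₁ : V → Bool) (W : Finset V) :
    (∀ w ∈ W, w ∈ S) → ∀ τ₂ : V → Bool, (∀ w ∈ S, w ∉ W → τ₁ w = τ₂ w) →
    |cpr (ising T β) (eventVal v true) (eventEq S τ₁)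
        - cpr (ising T β) (eventVal v true) (eventEq S τ₂)|
      ≤ ∑ w ∈ W, ((1 - β) / (1 + β)) ^ (T.dist v w) := by
  induction W using Finset.induction_on with
  | empty =>
    intro _ τ₂ h
    have heq : eventEq S τ₁ = eventEq S τ₂ := by
      ext σ
      exact forall₂_congr fun x hx => by rw [h x hx (Finset.notMem_empty x)]
    simp [heq]
  | insert w W hw ih =>
    intro hWS τ₂ h
    have h1 := ih (fun x hx => hWS x (Finset.mem_insert_of_mem hx))
      (Function.update τ₂ w (τ₁ w)) (fun x hx hxW => by
        by_cases hxw : x = w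
        · subst hxw; simp
        · rw [Function.update_of_ne hxw]
          exact h x hx (by simp [hxw, hxW]))
    have h2 := single_site hβ0 hβ1 hT S v w (hWS w (Finset.mem_insert_self _ _))
      (Function.update τ₂ w (τ₁ w)) τ₂ (fun x _ hxw => Function.update_of_ne hxw _ _)
    rw [Finset.sum_insert hw, add_comm]
    exact (abs_sub_le _ _ _).trans (add_le_add h1 h2)


/-- for the Ising model on a tree with `β ∈ (0,1)`, changing the boundary
condition on a subset `W ⊆ S` changes the marginal at `v` by at most
`Σ_{w∈W} ((1-β)/(1+β))^{dist(v,w)}`. -/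
theorem stmt6 (β : ℝ) (hβ0 : 0 < β) (hβ1 : β < 1)
    (V : Type) [Fintype V] (T : SimpleGraph V) (hT : T.IsTree)
    (S : Set V) (v : V) (τ₁ τ₂ : V → Bool) (W : Set V) (hWS : W ⊆ S)
    (hagree : ∀ w ∈ S, w ∉ W → τ₁ w = τ₂ w) :
    |cpr (ising T β) (eventVal v true) (eventEq S τ₁)
        - cpr (ising T β) (eventVal v true) (eventEq S τ₂)|
      ≤ ∑ w : W, ((1 - β) / (1 + β)) ^ (T.dist v w) := by
  have h := finset_sites hβ0 hβ1 hT S v τ₁ W.toFinset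
    (fun w hw => hWS (Set.mem_toFinset.1 hw)) τ₂
    (fun w hw hwW => hagree w hw (fun h => hwW (Set.mem_toFinset.2 h)))
  refine h.trans (le_of_eq ?_)
  exact Finset.sum_subtype _ (fun x => Set.mem_toFinset)
    (fun w => ((1 - β) / (1 + β)) ^ (T.dist v w))
end

section
/- Let d>1 and γ>0 be constants. Then there exists a constant χ>1 (depending only on d and γ) and, for each integer k≥1, a real W_k>0 (depending only on k, d, γ) such that the following holds. Let T=(V,E) be a finite tree and e an edge of T whose endpoints v_1 and v_2 have d-branching values at most α, and let k = max{deg(v_1), deg(v_2)}. Then for the monomer-dimer distribution on T with parameter γ, Σ_{f∈E} |I_T(e→f)| ≤ W_k · α^{1/χ}. -/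
/-!
Write `H - v` for the graph `H` with `v` isolated. The argument works in arbitrary finite graphs.

Conditioning on `e = v₁v₂` being absent or present replaces `T` by `H = T - e` or by
`T - v₁ - v₂ = H - v₁ - v₂` (`edgeInfluence_eq`). The triangle inequality through `H - v₁` then
bounds the total influence by `1 + D(H, v₁) + D(H - v₁, v₂)`, where `D(H, v)` is the `ℓ¹` change of
the edge marginals when `v` is removed from `H` (`totalChange`).

Let `q_u` be the probability that `v` is matched to `u`. Conditioning on the partner of `v` gives
`D(H, v) ≤ ∑_u q_u (1 + D(H - v, u))` (`totalChange_rec`), while the branching value satisfies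
`S(H, v) ≥ 1 + (1/d) ∑_u S(H - v, u)` (`branchingValue_rec`), both sums being over neighbours of `v`.

The two recursions are compared through Hölder's inequality with exponents `1 + ε` and
`χ = (1 + ε) / ε`. It suffices that `∑ q_u ^ (1 + ε) ≤ (1 / (2d)) ^ ε` for small `ε`
(`sum_rpow_le`). Let `p` be the probability that `v` is unmatched, so that `∑ q_u = 1 - p` and
`q_u ≤ γ p`. With `δ = 1 / (2 d γ)`: if `p ≥ δ`, the sum is at most `1 - δ`, and `ε` is chosen with
`1 - δ ≤ (1 / (2d)) ^ ε`; if `p < δ`, every `q_u` is at most `1 / (2d)`. Consequently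
`1 + D(H, v) ≤ W S(H, v) ^ (1/χ)` with `W = 1 / (1 - 2 ^ (-1/χ))` (`totalChange_le`), so a single
constant `2 W` serves for all degrees `k`.
-/

open Classical Filter

/-- The degree of a vertex. -/
noncomputable def deg {V : Type*} (G : SimpleGraph V) (v : V) : ℕ :=
  Nat.card {u : V // G.Adj v u}

/-- `N_{v,ℓ}`: the number of simple paths with exactly `ℓ+1` vertices starting at `v`. -/
noncomputable def numPaths {V : Type*} (G : SimpleGraph V) (v : V) (ℓ : ℕ) : ℕ :=
  Nat.card {p : (u : V) × G.Walk v u // p.2.IsPath ∧ p.2.length = ℓ}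

/-- The `d`-branching value `S_v = Σ_{ℓ ≥ 0} N_{v,ℓ}/d^ℓ` of a vertex `v`. -/
noncomputable def branchingValue {V : Type*} (G : SimpleGraph V) (d : ℝ) (v : V) : ℝ :=
  ∑' ℓ : ℕ, (numPaths G v ℓ : ℝ) / d ^ ℓ

/-- A configuration `σ : Sym2 V → Bool` is the indicator of a matching of `G`. -/
def IsMatchingConf {V : Type*} (G : SimpleGraph V) (σ : Sym2 V → Bool) : Prop :=
  (∀ e, σ e = true → e ∈ G.edgeSet) ∧
  ∀ e f, σ e = true → σ f = true → e ≠ f → ∀ v, v ∈ e → v ∉ f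

/-- Weight `γ^{|M|}` of a matching configuration (and `0` otherwise). -/
noncomputable def mdWeight {V : Type*} [Fintype V] [DecidableEq V] (G : SimpleGraph V)
    (γ : ℝ) (σ : Sym2 V → Bool) : ℝ :=
  if IsMatchingConf G σ then γ ^ (Finset.univ.filter (fun e : Sym2 V => σ e = true)).card else 0

/-- The monomer-dimer distribution `μ_{G,γ}` viewed on configurations `Sym2 V → Bool`. -/
noncomputable def monomerDimer {V : Type*} [Fintype V] [DecidableEq V] (G : SimpleGraph V)
    (γ : ℝ) : (Sym2 V → Bool) → ℝ :=
  fun σ => mdWeight G γ σ / ∑ σ' : Sym2 V → Bool, mdWeight G γ σ'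

/-- The influence of edge `e` on edge `f` in the monomer-dimer model:
`I_G(e→f) = μ(σ_f = 0 | σ_e = 0) - μ(σ_f = 0 | σ_e = 1)`. -/
noncomputable def edgeInfluence {V : Type*} [Fintype V] [DecidableEq V] (G : SimpleGraph V)
    (γ : ℝ) (e f : Sym2 V) : ℝ :=
  cpr (monomerDimer G γ) (eventVal f false) (eventVal e false)
    - cpr (monomerDimer G γ) (eventVal f false) (eventVal e true)

/-! ### Removing a vertex from a graph -/

/-- The graph `H` with all edges at `v` removed, on the same vertex set; it plays the role of
`H - v`, and keeping `v` as an isolated vertex does not change matchings. -/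
def isolate {V : Type*} (H : SimpleGraph V) (v : V) : SimpleGraph V where
  Adj a b := H.Adj a b ∧ a ≠ v ∧ b ≠ v
  symm := ⟨fun _ _ h => ⟨h.1.symm, h.2.2, h.2.1⟩⟩
  loopless := ⟨fun _ h => H.irrefl h.1⟩

lemma mem_isolate {V : Type*} (H : SimpleGraph V) (v : V) (e : Sym2 V) :
    e ∈ (isolate H v).edgeSet ↔ e ∈ H.edgeSet ∧ v ∉ e := by
  induction e with
  | _ a b => simp [isolate, eq_comm]

lemma isolate_le {V : Type*} (H : SimpleGraph V) (v : V) : isolate H v ≤ H := fun _ _ h => h.1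

lemma isMatchingConf_isolate {V : Type*} (H : SimpleGraph V) (v : V) (σ : Sym2 V → Bool) :
    IsMatchingConf (isolate H v) σ ↔ IsMatchingConf H σ ∧ ∀ e, σ e = true → v ∉ e := by
  unfold IsMatchingConf
  simp only [mem_isolate]
  grind

/-! ### Partition functions and edge marginals -/

section Weights

variable {V : Type*} [Fintype V] [DecidableEq V]

lemma mdWeight_nonneg (H : SimpleGraph V) {γ : ℝ} (hγ : 0 < γ) (σ : Sym2 V → Bool) :
    0 ≤ mdWeight H γ σ := by
  unfold mdWeight; split_ifs <;> positivity

/-- Sort matchings by the partner of `v`. -/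
lemma mdWeight_decomp (H : SimpleGraph V) (γ : ℝ) (v : V) (σ : Sym2 V → Bool) :
    mdWeight H γ σ = mdWeight (isolate H v) γ σ +
      ∑ u, if H.Adj v u then (if σ s(v, u) = true then mdWeight H γ σ else 0) else 0 := by
  by_cases hM : IsMatchingConf H σ
  · by_cases hv : ∀ e, σ e = true → v ∉ e
    · rw [Finset.sum_eq_zero]
      · have : IsMatchingConf (isolate H v) σ := (isMatchingConf_isolate H v σ).2 ⟨hM, hv⟩
        simp [mdWeight, this, hM]
      · intro u _
        have : σ s(v, u) ≠ true := fun h => hv _ h (by simp)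
        simp [this]
    · have h1 : mdWeight (isolate H v) γ σ = 0 := by
        simp only [mdWeight, isMatchingConf_isolate]
        rw [if_neg (fun h => hv h.2)]
      push Not at hv
      obtain ⟨e, he, hve⟩ := hv
      obtain ⟨u, rfl⟩ := Sym2.mem_iff_exists.1 hve
      have hadj : H.Adj v u := hM.1 _ he
      rw [h1, zero_add, Finset.sum_eq_single u]
      · simp [hadj, he]
      · intro w _ hw
        have : σ s(v, w) ≠ true := fun h =>
          hM.2 _ _ he h (fun h => hw (Sym2.congr_right.1 h).symm) v (by simp) (by simp)
        simp [this]
      · simp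
  · have h1 : mdWeight H γ σ = 0 := by simp [mdWeight, hM]
    have h2 : mdWeight (isolate H v) γ σ = 0 := by
      simp [mdWeight, isMatchingConf_isolate, hM]
    simp [h1, h2]

/-- The involution of configurations that flips the status of `e`. -/
def flipAt (e : Sym2 V) : (Sym2 V → Bool) ≃ (Sym2 V → Bool) where
  toFun σ := Function.update σ e (!σ e)
  invFun σ := Function.update σ e (!σ e)
  left_inv σ := by simp
  right_inv σ := by simp

/-- Adding the edge `vu` to a matching is possible exactly if neither endpoint is covered, and
multiplies the weight by `γ`. -/
lemma mdWeight_flip (H : SimpleGraph V) (γ : ℝ) {v u : V} (h : H.Adj v u) (σ : Sym2 V → Bool) :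
    (if flipAt s(v, u) σ s(v, u) = true then mdWeight H γ (flipAt s(v, u) σ) else 0) =
      γ * mdWeight (isolate (isolate H v) u) γ σ := by
  by_cases he : σ s(v, u) = true
  · have : ¬ IsMatchingConf (isolate (isolate H v) u) σ := by
      rw [isMatchingConf_isolate]
      exact fun h => h.2 _ he (by simp)
    simp [flipAt, he, mdWeight, this]
  · have he' : σ s(v, u) = false := by simpa using he
    have hf : flipAt s(v, u) σ = Function.update σ s(v, u) true := by simp [flipAt, he']
    have hM : IsMatchingConf H (flipAt s(v, u) σ) ↔
        IsMatchingConf (isolate (isolate H v) u) σ := by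
      rw [isMatchingConf_isolate, isMatchingConf_isolate, hf]
      constructor
      · intro hm
        have key : ∀ e, σ e = true → v ∉ e ∧ u ∉ e := by
          intro e hσ
          have hne : s(v, u) ≠ e := by rintro rfl; exact he hσ
          have := hm.2 s(v, u) e (by simp) (by simp [Function.update_of_ne hne.symm, hσ]) hne
          exact ⟨this v (by simp), this u (by simp)⟩
        refine ⟨⟨⟨fun e hσ => hm.1 e ?_, fun e f hσ hσ' => hm.2 e f ?_ ?_⟩,
          fun e hσ => (key e hσ).1⟩, fun e hσ => (key e hσ).2⟩ <;>
          · rw [Function.update_apply]; split_ifs <;> simp_all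
      · rintro ⟨⟨hm, h1⟩, h2⟩
        have hup : ∀ e, Function.update σ s(v, u) true e = true → e = s(v, u) ∨ σ e = true := by
          intro e; rw [Function.update_apply]; split_ifs with h <;> simp [h]
        refine ⟨fun e hσ => ?_, fun e f hσ hσ' hne w hw hw' => ?_⟩
        · rcases hup e hσ with rfl | hσ
          · exact h
          · exact hm.1 e hσ
        · rcases hup e hσ with rfl | hσ1 <;> rcases hup f hσ' with rfl | hσ1'
          · exact hne rfl
          · rcases Sym2.mem_iff.1 hw with rfl | rfl
            · exact h1 f hσ1' hw'
            · exact h2 f hσ1' hw'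
          · rcases Sym2.mem_iff.1 hw' with rfl | rfl
            · exact h1 e hσ1 hw
            · exact h2 e hσ1 hw
          · exact hm.2 e f hσ1 hσ1' hne w hw hw'
    have hc : (Finset.univ.filter (fun e : Sym2 V => flipAt s(v, u) σ e = true)).card =
        (Finset.univ.filter (fun e : Sym2 V => σ e = true)).card + 1 := by
      rw [← Finset.card_insert_of_notMem (a := s(v, u)) (by simp [he'])]
      congr 1
      ext e
      rw [hf]
      by_cases h : e = s(v, u)
      · subst h; simp
      · simp [h]
    have h1 : flipAt s(v, u) σ s(v, u) = true := by simp [hf]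
    rw [if_pos h1]
    unfold mdWeight
    rw [hc]
    simp only [hM]
    split_ifs
    · ring
    · simp

/-- Forbidding the edge `e` amounts to deleting it from the graph. -/
lemma mdWeight_deleteEdges (H : SimpleGraph V) (γ : ℝ) (e : Sym2 V) (σ : Sym2 V → Bool) :
    mdWeight (H.deleteEdges {e}) γ σ = if σ e = false then mdWeight H γ σ else 0 := by
  have : IsMatchingConf (H.deleteEdges {e}) σ ↔ IsMatchingConf H σ ∧ σ e = false := by
    unfold IsMatchingConf
    simp only [SimpleGraph.edgeSet_deleteEdges]
    grind
  unfold mdWeight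
  simp only [this]
  split_ifs <;> simp_all

/-- The partition function. -/
noncomputable def partFn (H : SimpleGraph V) (γ : ℝ) : ℝ := ∑ σ, mdWeight H γ σ

/-- The total weight of the matchings that contain `f`. -/
noncomputable def edgeWt (H : SimpleGraph V) (γ : ℝ) (f : Sym2 V) : ℝ :=
  ∑ σ : Sym2 V → Bool, if σ f = true then mdWeight H γ σ else 0

/-- The probability that the random matching contains `f`. -/
noncomputable def marg (H : SimpleGraph V) (γ : ℝ) (f : Sym2 V) : ℝ :=
  edgeWt H γ f / partFn H γ

/-- The `ℓ¹` change of the edge marginals when `v` is removed. -/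
noncomputable def totalChange (H : SimpleGraph V) (γ : ℝ) (v : V) : ℝ :=
  ∑ f : Sym2 V, |marg H γ f - marg (isolate H v) γ f|

lemma partFn_pos (H : SimpleGraph V) {γ : ℝ} (hγ : 0 < γ) : 0 < partFn H γ := by
  refine Finset.sum_pos' (fun σ _ => mdWeight_nonneg H hγ σ) ⟨fun _ => false, by simp, ?_⟩
  simp [mdWeight, IsMatchingConf]

lemma partFn_isolate_le (H : SimpleGraph V) {γ : ℝ} (hγ : 0 < γ) (v : V) :
    partFn (isolate H v) γ ≤ partFn H γ := by
  refine Finset.sum_le_sum fun σ _ => ?_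
  have h := mdWeight_nonneg H hγ σ
  by_cases h1 : IsMatchingConf (isolate H v) σ
  · have h2 := ((isMatchingConf_isolate H v σ).1 h1).1
    simp [mdWeight, h1, h2]
  · simpa [mdWeight, h1] using h

/-- Summing over the matchings that contain `vu` is, up to the factor `γ`, summing over the
matchings of `H - v - u`. -/
lemma sum_flip (H : SimpleGraph V) (γ : ℝ) {v u : V} (h : H.Adj v u)
    (g : (Sym2 V → Bool) → ℝ) :
    (∑ σ : Sym2 V → Bool, (if σ s(v, u) = true then mdWeight H γ σ else 0) * g σ) =
      γ * ∑ σ : Sym2 V → Bool, mdWeight (isolate (isolate H v) u) γ σ * g (flipAt s(v, u) σ) := by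
  rw [← Equiv.sum_comp (flipAt s(v, u)), Finset.mul_sum]
  refine Finset.sum_congr rfl fun σ _ => ?_
  rw [mdWeight_flip H γ h, mul_assoc]

lemma edgeWt_self (H : SimpleGraph V) (γ : ℝ) {v u : V} (h : H.Adj v u) :
    edgeWt H γ s(v, u) = γ * partFn (isolate (isolate H v) u) γ := by
  simpa [edgeWt, partFn] using sum_flip H γ h (fun _ => 1)

/-- The joint weight of `vu` and `f` being in the matching. -/
lemma sum_edge_pair (H : SimpleGraph V) (γ : ℝ) {v u : V} (h : H.Adj v u) (f : Sym2 V) :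
    (∑ σ : Sym2 V → Bool, (if σ s(v, u) = true then mdWeight H γ σ else 0) *
        (if σ f = true then 1 else 0)) =
      γ * ((if f = s(v, u) then partFn (isolate (isolate H v) u) γ else 0) +
        edgeWt (isolate (isolate H v) u) γ f) := by
  rw [sum_flip H γ h]
  congr 1
  by_cases hf : f = s(v, u)
  · subst hf
    rw [if_pos rfl, partFn, edgeWt, ← Finset.sum_add_distrib]
    refine Finset.sum_congr rfl fun σ _ => ?_
    by_cases he : σ s(v, u) = true
    · have : ¬ IsMatchingConf (isolate (isolate H v) u) σ := by
        rw [isMatchingConf_isolate]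
        exact fun h => h.2 _ he (by simp)
      simp [mdWeight, this]
    · simp [flipAt, he]
  · rw [if_neg hf, zero_add, edgeWt]
    refine Finset.sum_congr rfl fun σ _ => ?_
    simp [flipAt, Function.update_of_ne hf]

/-- The probability that `v` is matched to `u`, equal to `0` if `u` is not a neighbour of `v`. -/
noncomputable def edgeProb (H : SimpleGraph V) (γ : ℝ) (v u : V) : ℝ :=
  if H.Adj v u then γ * partFn (isolate (isolate H v) u) γ / partFn H γ else 0

lemma partFn_rec (H : SimpleGraph V) (γ : ℝ) (v : V) :
    partFn H γ = partFn (isolate H v) γ +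
      ∑ u, if H.Adj v u then γ * partFn (isolate (isolate H v) u) γ else 0 := by
  have : partFn H γ = ∑ σ, mdWeight H γ σ := rfl
  rw [this, Finset.sum_congr rfl (fun σ _ => mdWeight_decomp H γ v σ), Finset.sum_add_distrib,
    Finset.sum_comm]
  congr 1
  refine Finset.sum_congr rfl fun u _ => ?_
  split_ifs with h
  · exact edgeWt_self H γ h
  · simp

lemma edgeWt_rec (H : SimpleGraph V) (γ : ℝ) (v : V) (f : Sym2 V) :
    edgeWt H γ f = edgeWt (isolate H v) γ f +
      ∑ u, if H.Adj v u then
        γ * ((if f = s(v, u) then partFn (isolate (isolate H v) u) γ else 0) +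
        edgeWt (isolate (isolate H v) u) γ f) else 0 := by
  have e1 : ∀ G : SimpleGraph V,
      edgeWt G γ f = ∑ σ, mdWeight G γ σ * (if σ f = true then 1 else 0) := by
    intro G; simp [edgeWt]
  rw [e1 H, Finset.sum_congr rfl (fun σ _ => by rw [mdWeight_decomp H γ v σ, add_mul]),
    Finset.sum_add_distrib, ← e1]
  congr 1
  simp_rw [Finset.sum_mul]
  rw [Finset.sum_comm]
  refine Finset.sum_congr rfl fun u _ => ?_
  by_cases h : H.Adj v u
  · simp only [if_pos h]
    exact sum_edge_pair H γ h f
  · simp [h]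

lemma edgeProb_nonneg (H : SimpleGraph V) {γ : ℝ} (hγ : 0 < γ) (v u : V) :
    0 ≤ edgeProb H γ v u := by
  unfold edgeProb
  have := partFn_pos H hγ
  have := partFn_pos (isolate (isolate H v) u) hγ
  split_ifs <;> positivity

lemma sum_edgeProb (H : SimpleGraph V) {γ : ℝ} (hγ : 0 < γ) (v : V) :
    ∑ u, edgeProb H γ v u = 1 - partFn (isolate H v) γ / partFn H γ := by
  have h0 := (partFn_pos H hγ).ne'
  have h := partFn_rec H γ v
  have : ∑ u, edgeProb H γ v u = (∑ u, if H.Adj v u then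
      γ * partFn (isolate (isolate H v) u) γ else 0) / partFn H γ := by
    rw [Finset.sum_div]
    refine Finset.sum_congr rfl fun u _ => ?_
    unfold edgeProb
    split_ifs <;> simp
  rw [this, eq_sub_iff_add_eq, ← add_div, div_eq_one_iff_eq h0]
  linarith

lemma edgeProb_le (H : SimpleGraph V) {γ : ℝ} (hγ : 0 < γ) (v u : V) :
    edgeProb H γ v u ≤ γ * (partFn (isolate H v) γ / partFn H γ) := by
  have h0 := partFn_pos H hγ
  have h1 := partFn_pos (isolate H v) hγ
  unfold edgeProb
  split_ifs
  · rw [← mul_div_assoc]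
    gcongr
    exact partFn_isolate_le _ hγ u
  · positivity

/-- Condition on the partner of `v`: given that `v` is unmatched, the matching is distributed as in
`H - v`; given that `v` is matched to `u`, the rest is distributed as in `H - v - u`. -/
lemma marg_sub (H : SimpleGraph V) {γ : ℝ} (hγ : 0 < γ) (v : V) (f : Sym2 V) :
    marg H γ f - marg (isolate H v) γ f = ∑ u, edgeProb H γ v u *
      ((if f = s(v, u) then 1 else 0) +
        (marg (isolate (isolate H v) u) γ f - marg (isolate H v) γ f)) := by
  have h0 := (partFn_pos H hγ).ne'
  have h1 := (partFn_pos (isolate H v) hγ).ne'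
  have h2 : marg H γ f = edgeWt (isolate H v) γ f / partFn H γ +
      ∑ u, edgeProb H γ v u * ((if f = s(v, u) then 1 else 0) +
        marg (isolate (isolate H v) u) γ f) := by
    rw [marg, edgeWt_rec H γ v f, add_div, Finset.sum_div]
    congr 1
    refine Finset.sum_congr rfl fun u _ => ?_
    have h3 := (partFn_pos (isolate (isolate H v) u) hγ).ne'
    unfold edgeProb marg
    split_ifs <;> (try simp only [zero_mul, zero_add, zero_div]) <;> field_simp
  have h4 : ∑ u, edgeProb H γ v u * ((if f = s(v, u) then 1 else 0) +
        (marg (isolate (isolate H v) u) γ f - marg (isolate H v) γ f)) =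
      ∑ u, edgeProb H γ v u * ((if f = s(v, u) then 1 else 0) +
        marg (isolate (isolate H v) u) γ f) -
      (∑ u, edgeProb H γ v u) * marg (isolate H v) γ f := by
    rw [Finset.sum_mul, ← Finset.sum_sub_distrib]
    exact Finset.sum_congr rfl fun u _ => by ring
  rw [h4, h2, sum_edgeProb H hγ]
  unfold marg
  field_simp
  ring

/-- One step of the walk-tree recursion for the change of the marginals. -/
lemma totalChange_rec (H : SimpleGraph V) {γ : ℝ} (hγ : 0 < γ) (v : V) :
    totalChange H γ v ≤ ∑ u, edgeProb H γ v u * (1 + totalChange (isolate H v) γ u) := by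
  calc totalChange H γ v
      ≤ ∑ f : Sym2 V, ∑ u, edgeProb H γ v u * ((if f = s(v, u) then 1 else 0) +
          |marg (isolate H v) γ f - marg (isolate (isolate H v) u) γ f|) := by
        refine Finset.sum_le_sum fun f _ => ?_
        rw [marg_sub H hγ]
        refine (Finset.abs_sum_le_sum_abs _ _).trans (Finset.sum_le_sum fun u _ => ?_)
        rw [abs_mul, abs_of_nonneg (edgeProb_nonneg H hγ v u)]
        refine mul_le_mul_of_nonneg_left ?_ (edgeProb_nonneg H hγ v u)
        refine (abs_add_le _ _).trans ?_
        rw [abs_sub_comm (marg (isolate H v) γ f)]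
        gcongr
        split_ifs <;> simp
    _ = _ := by
        rw [Finset.sum_comm]
        refine Finset.sum_congr rfl fun u _ => ?_
        rw [← Finset.mul_sum, Finset.sum_add_distrib, totalChange]
        simp

lemma totalChange_nonneg (H : SimpleGraph V) (γ : ℝ) (v : V) : 0 ≤ totalChange H γ v :=
  Finset.sum_nonneg fun _ _ => abs_nonneg _

/-- Conditioning on `vu` being absent gives the model on `H` with that edge deleted; conditioning on
its presence gives the model on `H - v - u` together with the edge `vu` itself. -/
lemma edgeInfluence_eq (H : SimpleGraph V) {γ : ℝ} (hγ : 0 < γ) {v u : V} (h : H.Adj v u)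
    (f : Sym2 V) :
    edgeInfluence H γ s(v, u) f = (if f = s(v, u) then 1 else 0) +
      marg (isolate (isolate H v) u) γ f - marg (H.deleteEdges {s(v, u)}) γ f := by
  have hZ : (∑ σ' : Sym2 V → Bool, mdWeight H γ σ') ≠ 0 := (partFn_pos H hγ).ne'
  have hc : ∀ A B : Set (Sym2 V → Bool), cpr (monomerDimer H γ) A B =
      (∑ σ, if σ ∈ A ∩ B then mdWeight H γ σ else 0) /
        ∑ σ, if σ ∈ B then mdWeight H γ σ else 0 := by
    intro A B
    have hp : ∀ A, pr (monomerDimer H γ) A =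
        (∑ σ, if σ ∈ A then mdWeight H γ σ else 0) / ∑ σ', mdWeight H γ σ' := by
      intro A
      rw [pr, Finset.sum_div]
      refine Finset.sum_congr (by ext; simp) fun σ _ => ?_
      unfold monomerDimer
      split_ifs <;> simp
    rw [cpr, hp, hp, div_div_div_cancel_right₀ hZ]
    congr!
  have hZ1 := (partFn_pos (H.deleteEdges {s(v, u)}) hγ).ne'
  have hZ2 := (partFn_pos (isolate (isolate H v) u) hγ).ne'
  have c1 : cpr (monomerDimer H γ) (eventVal f false) (eventVal s(v, u) false) =
      1 - marg (H.deleteEdges {s(v, u)}) γ f := by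
    have hd : (∑ σ, if σ ∈ eventVal s(v, u) false then mdWeight H γ σ else 0) =
        partFn (H.deleteEdges {s(v, u)}) γ := by
      rw [partFn]
      exact Finset.sum_congr rfl fun σ _ => by
        rw [mdWeight_deleteEdges]; exact if_congr Iff.rfl rfl rfl
    rw [hc, hd, marg, eq_sub_iff_add_eq, ← add_div, div_eq_one_iff_eq hZ1, partFn, edgeWt,
      ← Finset.sum_add_distrib]
    refine Finset.sum_congr rfl fun σ _ => ?_
    rw [mdWeight_deleteEdges]
    simp only [eventVal, Set.mem_inter_iff, Set.mem_ofPred_eq]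
    cases σ f <;> cases σ s(v, u) <;> simp
  have c2 : cpr (monomerDimer H γ) (eventVal f false) (eventVal s(v, u) true) =
      1 - ((if f = s(v, u) then 1 else 0) + marg (isolate (isolate H v) u) γ f) := by
    have hd : (∑ σ, if σ ∈ eventVal s(v, u) true then mdWeight H γ σ else 0) =
        γ * partFn (isolate (isolate H v) u) γ := by
      rw [← edgeWt_self H γ h, edgeWt]
      exact Finset.sum_congr rfl fun σ _ => if_congr Iff.rfl rfl rfl
    have hn : (∑ σ, if σ ∈ eventVal f false ∩ eventVal s(v, u) true then mdWeight H γ σ else 0) =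
        γ * partFn (isolate (isolate H v) u) γ -
        γ * ((if f = s(v, u) then partFn (isolate (isolate H v) u) γ else 0) +
        edgeWt (isolate (isolate H v) u) γ f) := by
      rw [← sum_edge_pair H γ h f, ← edgeWt_self H γ h, edgeWt, ← Finset.sum_sub_distrib]
      refine Finset.sum_congr rfl fun σ _ => ?_
      simp only [eventVal, Set.mem_inter_iff, Set.mem_ofPred_eq]
      cases σ f <;> cases σ s(v, u) <;> simp
    rw [hc, hd, hn, marg]
    split_ifs <;> (try simp only [zero_add]) <;> field_simp
  rw [edgeInfluence, c1, c2]
  ring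

end Weights

/-! ### Paths and branching values -/
/-- A walk with a fixed start and a varying end is determined by its list of vertices. -/
lemma sigmaWalk_ext {V : Type*} {G : SimpleGraph V} {v : V} {x y : (u : V) × G.Walk v u}
    (h : x.2.support = y.2.support) : x = y := by
  obtain ⟨a, p⟩ := x
  obtain ⟨b, q⟩ := y
  have hab : a = b := by
    rw [← p.getLast_support, ← q.getLast_support]
    congr 1
  subst hab
  congr 1
  exact SimpleGraph.Walk.ext_support h

instance {V : Type*} [Finite V] (G : SimpleGraph V) (v : V) (ℓ : ℕ) :
    Finite {p : (u : V) × G.Walk v u // p.2.IsPath ∧ p.2.length = ℓ} := by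
  have := Fintype.ofFinite V
  refine Finite.of_injective (β := {l : List V // l.Nodup})
    (fun p => ⟨p.1.2.support, p.2.1.support_nodup⟩) fun x y h => ?_
  exact Subtype.ext (sigmaWalk_ext (Subtype.ext_iff.1 h))

lemma numPaths_zero {V : Type*} (G : SimpleGraph V) (v : V) : numPaths G v 0 = 1 := by
  rw [numPaths, Nat.card_eq_one_iff_unique]
  refine ⟨⟨fun x y => Subtype.ext (sigmaWalk_ext ?_)⟩,
    ⟨⟨⟨v, SimpleGraph.Walk.nil⟩, by simp, by simp⟩⟩⟩
  have key : ∀ x : {p : (u : V) × G.Walk v u // p.2.IsPath ∧ p.2.length = 0},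
      x.1.2.support = [v] := by
    rintro ⟨⟨a, p⟩, hp, hl⟩
    cases p with
    | nil => rfl
    | cons => simp at hl
  rw [key, key]

lemma numPaths_eq_zero {V : Type*} [Fintype V] (G : SimpleGraph V) (v : V) {ℓ : ℕ}
    (h : Fintype.card V ≤ ℓ) : numPaths G v ℓ = 0 := by
  rw [numPaths, Nat.card_eq_zero]
  left
  refine ⟨fun ⟨p, hp, hl⟩ => ?_⟩
  have := hp.length_lt
  omega

lemma numPaths_mono {V : Type*} [Finite V] {G G' : SimpleGraph V} (h : G ≤ G') (v : V) (ℓ : ℕ) :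
    numPaths G v ℓ ≤ numPaths G' v ℓ := by
  refine Nat.card_le_card_of_injective
    (fun p => ⟨⟨p.1.1, p.1.2.mapLe h⟩, p.2.1.mapLe h, by simpa using p.2.2⟩) fun x y hxy => ?_
  refine Subtype.ext (sigmaWalk_ext ?_)
  have := congrArg (fun p => p.1.2.support) hxy
  simpa using this

lemma notMem_support_isolate {V : Type*} {H : SimpleGraph V} {v a b : V}
    (p : (isolate H v).Walk a b) (ha : a ≠ v) : v ∉ p.support := by
  induction p with
  | nil => simpa using ha.symm
  | cons h p ih => simpa using ⟨ha.symm, ih h.2.2⟩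

/-- Prepending `v` to the paths of `H - v` starting at a neighbour gives distinct paths at `v`. -/
lemma numPaths_succ {V : Type*} [Fintype V] (H : SimpleGraph V) (v : V) (ℓ : ℕ) :
    (∑ u, if H.Adj v u then numPaths (isolate H v) u ℓ else 0) ≤ numPaths H v (ℓ + 1) := by
  rw [← Finset.sum_filter, Finset.sum_subtype (p := fun u => H.Adj v u) _ (by simp)]
  simp only [numPaths]
  rw [← Nat.card_sigma]
  refine Nat.card_le_card_of_injective
    (fun x => ⟨⟨x.2.1.1, SimpleGraph.Walk.cons x.1.2 (x.2.1.2.mapLe (isolate_le H v))⟩, ?_, ?_⟩) ?_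
  · rw [SimpleGraph.Walk.cons_isPath_iff]
    refine ⟨x.2.2.1.mapLe _, ?_⟩
    simpa using notMem_support_isolate x.2.1.2 x.1.2.ne'
  · simpa using x.2.2.2
  · rintro ⟨⟨a, ha⟩, x⟩ ⟨⟨b, hb⟩, y⟩ hxy
    have h1 : x.1.2.support = y.1.2.support := by
      have := congrArg (fun p => p.1.2.support) hxy
      simpa using this
    have hab : a = b := by
      have h2 := congrArg List.head? h1
      rw [← SimpleGraph.Walk.cons_tail_support x.1.2,
        ← SimpleGraph.Walk.cons_tail_support y.1.2] at h2
      exact Option.some.inj h2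
    subst hab
    congr 1
    exact Subtype.ext (sigmaWalk_ext h1)

lemma branchingValue_eq {V : Type*} [Fintype V] (G : SimpleGraph V) (d : ℝ) (v : V) {N : ℕ}
    (h : Fintype.card V ≤ N) :
    branchingValue G d v = ∑ ℓ ∈ Finset.range N, (numPaths G v ℓ : ℝ) / d ^ ℓ := by
  refine tsum_eq_sum fun ℓ hℓ => ?_
  rw [numPaths_eq_zero G v (h.trans (by simpa using hℓ))]
  simp

lemma branchingValue_mono {V : Type*} [Fintype V] {G G' : SimpleGraph V} (h : G ≤ G') {d : ℝ}
    (hd : 0 < d) (v : V) : branchingValue G d v ≤ branchingValue G' d v := by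
  rw [branchingValue_eq G d v le_rfl, branchingValue_eq G' d v le_rfl]
  gcongr
  exact numPaths_mono h v _

lemma branchingValue_rec {V : Type*} [Fintype V] (H : SimpleGraph V) {d : ℝ} (hd : 0 < d)
    (v : V) : 1 + (∑ u, if H.Adj v u then branchingValue (isolate H v) d u else 0) / d ≤
      branchingValue H d v := by
  rw [branchingValue_eq H d v (Nat.le_succ _), Finset.sum_range_succ', numPaths_zero, add_comm]
  simp only [Nat.cast_one, pow_zero, div_one]
  gcongr
  calc (∑ u, if H.Adj v u then branchingValue (isolate H v) d u else 0) / d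
      = ∑ ℓ ∈ Finset.range (Fintype.card V),
          ((∑ u, if H.Adj v u then numPaths (isolate H v) u ℓ else 0 : ℕ) : ℝ) / d ^ (ℓ + 1) := by
        simp_rw [branchingValue_eq (isolate H v) d _ le_rfl, Nat.cast_sum, Finset.sum_div]
        rw [Finset.sum_comm]
        refine Finset.sum_congr rfl fun u _ => ?_
        split_ifs
        · rw [Finset.sum_div]
          refine Finset.sum_congr rfl fun ℓ _ => ?_
          rw [pow_succ, div_div]
        · simp
    _ ≤ _ := by
        gcongr
        exact numPaths_succ H v _

lemma one_le_branchingValue {V : Type*} [Fintype V] (H : SimpleGraph V) {d : ℝ} (hd : 0 < d)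
    (v : V) : 1 ≤ branchingValue H d v := by
  rw [branchingValue_eq H d v (Nat.le_succ _), Finset.sum_range_succ', numPaths_zero]
  simp only [Nat.cast_one, pow_zero, div_one, le_add_iff_nonneg_left]
  positivity

/-! ### The contraction estimate -/

lemma exists_exponent {d δ : ℝ} (hδ : 0 < δ) (hd : 0 < d) :
    ∃ ε : ℝ, 0 < ε ∧ 1 - δ ≤ (1 / (2 * d)) ^ ε := by
  have h : Tendsto (fun ε : ℝ => (1 / (2 * d)) ^ ε) (nhdsWithin 0 (Set.Ioi 0)) (nhds 1) := by
    have := (Real.continuousAt_const_rpow (a := 1 / (2 * d)) (b := 0) (by positivity)).tendsto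
    rw [Real.rpow_zero] at this
    exact this.mono_left nhdsWithin_le_nhds
  have h1 := h.eventually (eventually_ge_nhds (show 1 - δ < 1 by linarith))
  obtain ⟨ε, h2, h3⟩ := (h1.and self_mem_nhdsWithin).exists
  exact ⟨ε, h3, h2⟩

/-- The `(1 + ε)`-norm of the transition probabilities at `v` is small: if `v` is unmatched with
probability `p ≥ δ`, their sum `1 - p` is bounded away from `1`; if `p < δ`, each of them is
at most `γ δ ≤ 1 / (2 d)`. -/
lemma sum_rpow_le {ι : Type*} [Fintype ι] {d γ δ ε p : ℝ} {q : ι → ℝ} (hd : 0 < d) (hγ : 0 < γ)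
    (hγδ : γ * δ ≤ 1 / (2 * d)) (hε : 0 < ε) (h : 1 - δ ≤ (1 / (2 * d)) ^ ε)
    (hq : ∀ i, 0 ≤ q i) (hp : 0 < p) (hsum : ∑ i, q i = 1 - p) (hle : ∀ i, q i ≤ γ * p) :
    ∑ i, q i ^ (1 + ε) ≤ (1 / (2 * d)) ^ ε := by
  have hs : ∀ i, q i ^ (1 + ε) = q i * q i ^ ε := fun i => by
    rw [Real.rpow_add' (hq i) (by positivity), Real.rpow_one]
  simp_rw [hs]
  by_cases hpδ : δ ≤ p
  · calc ∑ i, q i * q i ^ ε ≤ ∑ i, q i := by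
          refine Finset.sum_le_sum fun i _ => ?_
          have h1 : q i ≤ 1 := by
            have := Finset.single_le_sum (fun j _ => hq j) (Finset.mem_univ i)
            linarith
          exact mul_le_of_le_one_right (hq i) (Real.rpow_le_one (hq i) h1 hε.le)
      _ ≤ _ := by linarith
  · push Not at hpδ
    calc ∑ i, q i * q i ^ ε ≤ ∑ i, q i * (1 / (2 * d)) ^ ε := by
          refine Finset.sum_le_sum fun i _ => mul_le_mul_of_nonneg_left ?_ (hq i)
          refine Real.rpow_le_rpow (hq i) ?_ hε.le
          nlinarith [hle i]
      _ = (1 - p) * (1 / (2 * d)) ^ ε := by rw [← Finset.sum_mul, hsum]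
      _ ≤ _ := mul_le_of_le_one_left (by positivity) (by linarith)

/-- Hölder's inequality with exponents `1 + ε` and `χ = (1 + ε) / ε`. -/
lemma holder_step {ι : Type*} [Fintype ι] {d ε χ S : ℝ} {q g : ι → ℝ} (hd : 0 < d) (hε : 0 < ε)
    (hχ : χ = (1 + ε) / ε) (hq : ∀ i, 0 ≤ q i) (hg : ∀ i, 0 ≤ g i)
    (hqs : ∑ i, q i ^ (1 + ε) ≤ (1 / (2 * d)) ^ ε) (hgs : 1 + (∑ i, g i ^ χ) / d ≤ S) :
    ∑ i, q i * g i ≤ (1 / 2) ^ (1 / χ) * S ^ (1 / χ) := by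
  have hχ0 : 0 < χ := by rw [hχ]; positivity
  have hconj : (1 + ε).HolderConjugate χ := by
    rw [Real.holderConjugate_iff]
    refine ⟨by linarith, ?_⟩
    rw [hχ]; field_simp
  have hθε : ε * (1 / (1 + ε)) = 1 / χ := by rw [hχ]; field_simp
  have hA : (∑ i, q i ^ (1 + ε)) ^ (1 / (1 + ε)) ≤ (1 / (2 * d)) ^ (1 / χ) := by
    rw [← hθε, Real.rpow_mul (by positivity)]
    exact Real.rpow_le_rpow (Finset.sum_nonneg fun i _ => Real.rpow_nonneg (hq i) _) hqs
      (by positivity)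
  have hB0 : 0 ≤ ∑ i, g i ^ χ := Finset.sum_nonneg fun i _ => Real.rpow_nonneg (hg i) _
  have hS : 0 ≤ S := by
    have : 0 ≤ (∑ i, g i ^ χ) / d := by positivity
    linarith
  have hB : 1 / (2 * d) * ∑ i, g i ^ χ ≤ 1 / 2 * S := by
    have e : ∀ x : ℝ, 1 / (2 * d) * x = 1 / 2 * (x / d) := fun x => by field_simp
    rw [e]
    linarith
  calc ∑ i, q i * g i
      ≤ (∑ i, q i ^ (1 + ε)) ^ (1 / (1 + ε)) * (∑ i, g i ^ χ) ^ (1 / χ) :=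
        Real.inner_le_Lp_mul_Lq_of_nonneg _ hconj (fun i _ => hq i) (fun i _ => hg i)
    _ ≤ (1 / (2 * d)) ^ (1 / χ) * (∑ i, g i ^ χ) ^ (1 / χ) := by gcongr
    _ = (1 / (2 * d) * ∑ i, g i ^ χ) ^ (1 / χ) := by rw [Real.mul_rpow (by positivity) hB0]
    _ ≤ (1 / 2 * S) ^ (1 / χ) := by gcongr
    _ = _ := by rw [Real.mul_rpow (by norm_num) hS]

/-- The bound on the influence of removing a vertex, by induction on the number of edges:
`holder_step` turns the recursion for `totalChange` into the
recursion for the branching value. -/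
lemma totalChange_le {V : Type*} [Fintype V] [DecidableEq V] {d γ δ ε χ W : ℝ} (hd : 0 < d)
    (hγ : 0 < γ) (hγδ : γ * δ ≤ 1 / (2 * d)) (hε : 0 < ε) (h : 1 - δ ≤ (1 / (2 * d)) ^ ε)
    (hχ : χ = (1 + ε) / ε) (hW : W = 1 / (1 - (1 / 2) ^ (1 / χ))) (n : ℕ) :
    ∀ (H : SimpleGraph V) (v : V), H.edgeSet.ncard ≤ n →
      1 + totalChange H γ v ≤ W * branchingValue H d v ^ (1 / χ) := by
  have hχ0 : 0 < χ := by rw [hχ]; positivity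
  set θ := 1 / χ with hθ
  have hθ0 : 0 < θ := by positivity
  have hr : ((1 : ℝ) / 2) ^ θ < 1 := Real.rpow_lt_one (by norm_num) (by norm_num) hθ0
  have hW0 : 0 < W := by rw [hW]; exact one_div_pos.2 (by linarith)
  have hWr : 1 + W * (1 / 2) ^ θ = W := by
    have : 1 - ((1 : ℝ) / 2) ^ θ ≠ 0 := by linarith
    rw [hW]; field_simp; ring
  induction n using Nat.strong_induction_on with
  | _ n ih =>
    intro H v hn
    set S := branchingValue H d v with hS
    have hS1 : 1 ≤ S := one_le_branchingValue H hd v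
    set g : V → ℝ := fun u => if H.Adj v u then branchingValue (isolate H v) d u ^ θ else 0 with hg
    have hg0 : ∀ u, 0 ≤ g u := fun u => by
      have := one_le_branchingValue (isolate H v) hd u
      simp only [hg]; split_ifs <;> positivity
    have hgχ : ∀ u, g u ^ χ = if H.Adj v u then branchingValue (isolate H v) d u else 0 := by
      intro u
      have := one_le_branchingValue (isolate H v) hd u
      simp only [hg]
      split_ifs
      · rw [← Real.rpow_mul (by positivity), hθ, one_div_mul_cancel hχ0.ne', Real.rpow_one]
      · exact Real.zero_rpow hχ0.ne'
    have hstep : totalChange H γ v ≤ W * ∑ u, edgeProb H γ v u * g u := by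
      refine (totalChange_rec H hγ v).trans ?_
      rw [Finset.mul_sum]
      refine Finset.sum_le_sum fun u _ => ?_
      by_cases hu : H.Adj v u
      · rw [← mul_left_comm]
        refine mul_le_mul_of_nonneg_left ?_ (edgeProb_nonneg H hγ v u)
        have hlt : (isolate H v).edgeSet.ncard < H.edgeSet.ncard := by
          refine Set.ncard_lt_ncard ⟨fun e he => ((mem_isolate H v e).1 he).1, fun hsub => ?_⟩
            (Set.toFinite _)
          have := hsub (show s(v, u) ∈ H.edgeSet from hu)
          exact ((mem_isolate H v _).1 this).2 (by simp)
        simpa [hg, hu] using ih _ (hlt.trans_le hn) (isolate H v) u le_rfl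
      · simp [edgeProb, hu]
    have hH : ∑ u, edgeProb H γ v u * g u ≤ (1 / 2) ^ θ * S ^ θ := by
      refine holder_step hd hε hχ (edgeProb_nonneg H hγ v) hg0 ?_ ?_
      · exact sum_rpow_le hd hγ hγδ hε h (edgeProb_nonneg H hγ v)
          (div_pos (partFn_pos _ hγ) (partFn_pos H hγ)) (sum_edgeProb H hγ v) (edgeProb_le H hγ v)
      · rw [Finset.sum_congr rfl fun u _ => hgχ u]
        exact branchingValue_rec H hd v
    calc 1 + totalChange H γ v ≤ S ^ θ + W * ((1 / 2) ^ θ * S ^ θ) := by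
          have := Real.one_le_rpow hS1 hθ0.le
          have := mul_le_mul_of_nonneg_left hH hW0.le
          linarith
      _ = (1 + W * (1 / 2) ^ θ) * S ^ θ := by ring
      _ = W * S ^ θ := by rw [hWr]

/-- total influence of an edge of a tree, for the monomer-dimer model,
is bounded by `W_k · α^{1/χ}` where `α` bounds the `d`-branching values of the two
endpoints of the edge and `k` is the maximum of their degrees. -/
theorem stmt8 (d γ : ℝ) (hd : 1 < d) (hγ : 0 < γ) :
    ∃ χ : ℝ, 1 < χ ∧
      ∀ k : ℕ, 1 ≤ k → ∃ W : ℝ, 0 < W ∧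
        ∀ (V : Type) [Fintype V] [DecidableEq V] (T : SimpleGraph V) (v₁ v₂ : V) (α : ℝ),
          T.IsTree → T.Adj v₁ v₂ →
          branchingValue T d v₁ ≤ α → branchingValue T d v₂ ≤ α →
          max (deg T v₁) (deg T v₂) = k →
          (∑ f : Sym2 V, if f ∈ T.edgeSet then |edgeInfluence T γ s(v₁, v₂) f| else 0)
            ≤ W * α ^ (1 / χ) := by
  set δ : ℝ := 1 / (2 * d * γ) with hδ
  have hd0 : 0 < d := by linarith
  have hδ0 : 0 < δ := by positivity
  have hγδ : γ * δ ≤ 1 / (2 * d) := by rw [hδ]; apply le_of_eq; field_simp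
  obtain ⟨ε, hε, h⟩ := exists_exponent hδ0 hd0
  have hχ : 1 < (1 + ε) / ε := by rw [lt_div_iff₀ hε]; linarith
  refine ⟨(1 + ε) / ε, hχ, fun k _ => ?_⟩
  set χ := (1 + ε) / ε with hχe
  have hr : ((1 : ℝ) / 2) ^ (1 / χ) < 1 :=
    Real.rpow_lt_one (by norm_num) (by norm_num) (by positivity)
  have hW0 : 0 < 1 / (1 - ((1 : ℝ) / 2) ^ (1 / χ)) := one_div_pos.2 (by linarith)
  set W := 1 / (1 - ((1 : ℝ) / 2) ^ (1 / χ)) with hW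
  refine ⟨2 * W, by positivity, ?_⟩
  intro V _ _ T v₁ v₂ α _ hadj h1 h2 _
  set H := T.deleteEdges {s(v₁, v₂)} with hH
  have hHT : H ≤ T := SimpleGraph.deleteEdges_le _
  have key : ∀ (G : SimpleGraph V) (v : V), G ≤ T → branchingValue T d v ≤ α →
      1 + totalChange G γ v ≤ W * α ^ (1 / χ) := by
    intro G v hG hv
    refine (totalChange_le hd0 hγ hγδ hε h hχe hW _ G v le_rfl).trans ?_
    have := one_le_branchingValue G hd0 v
    gcongr
    exact (branchingValue_mono hG hd0 v).trans hv
  have k1 := key H v₁ hHT h1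
  have k2 := key (isolate H v₁) v₂ ((isolate_le H v₁).trans hHT) h2
  have hiso : isolate (isolate T v₁) v₂ = isolate (isolate H v₁) v₂ := by
    ext a b
    simp only [isolate, hH, SimpleGraph.deleteEdges_adj, Set.mem_singleton_iff, Sym2.eq_iff]
    grind
  have hsum : (∑ f : Sym2 V, if f ∈ T.edgeSet then |edgeInfluence T γ s(v₁, v₂) f| else 0) ≤
      ∑ f : Sym2 V, ((if f = s(v₁, v₂) then 1 else 0) + |marg H γ f - marg (isolate H v₁) γ f| +
        |marg (isolate H v₁) γ f - marg (isolate (isolate H v₁) v₂) γ f|) := by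
    refine Finset.sum_le_sum fun f _ => ?_
    have hab : |edgeInfluence T γ s(v₁, v₂) f| ≤ (if f = s(v₁, v₂) then 1 else 0) +
        |marg H γ f - marg (isolate H v₁) γ f| +
        |marg (isolate H v₁) γ f - marg (isolate (isolate H v₁) v₂) γ f| := by
      rw [edgeInfluence_eq T hγ hadj, hiso, ← hH]
      have a1 := abs_le.1 (le_refl |marg H γ f - marg (isolate H v₁) γ f|)
      have a2 := abs_le.1
        (le_refl |marg (isolate H v₁) γ f - marg (isolate (isolate H v₁) v₂) γ f|)
      rw [abs_le]
      split_ifs <;> constructor <;> linarith [a1.1, a1.2, a2.1, a2.2]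
    split_ifs at hab ⊢ with hf hf'
    all_goals first | exact hab | positivity
  refine hsum.trans ?_
  rw [Finset.sum_add_distrib, Finset.sum_add_distrib]
  change _ + totalChange H γ v₁ + totalChange (isolate H v₁) γ v₂ ≤ _
  rw [Finset.sum_ite_eq' Finset.univ s(v₁, v₂), if_pos (Finset.mem_univ _)]
  linarith
end
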